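/- The number of ~_s-equivalence classes of s-recurrent configurations equals the period constant of G: |Rec(G,s)/~_s| = α, where α := gcd_{v∈V} det(Δ_v) and Δ_v denotes the reduced Laplacian obtained from the Laplacian Δ of G by deleting the row and the column indexed by v. In particular, |Rec(G,s)/~_s| does not depend on the choice of s. -/

import Mathlib

open Finset Polynomial

namespace SandpileBM

variable {V E : Type} [Fintype V] [DecidableEq V] [Fintype E] [DecidableEq E]

/-- The number of edges from `v` to `w` in the multigraph given by `src`, `tgt`. -/
def numEdges (src tgt : E → V) (v w : V) : ℕ :=
  (Finset.univ.filter fun e => src e = v ∧ tgt e = w).card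

/-- The out-degree of a vertex. -/
def outdeg (src : E → V) (v : V) : ℕ :=
  (Finset.univ.filter fun e => src e = v).card

/-- The in-degree of a vertex. -/
def indeg (tgt : E → V) (v : V) : ℕ :=
  (Finset.univ.filter fun e => tgt e = v).card

/-- The digraph is strongly connected: any vertex is reachable from any other by
a directed path. -/
def StronglyConnected (src tgt : E → V) : Prop :=
  ∀ v w : V, Relation.ReflTransGen (fun a b => ∃ e : E, src e = a ∧ tgt e = b) v w

/-- Result of firing the vertex `v` on the chip configuration `c` (sinkless model). -/
def fire (src tgt : E → V) (c : V → ℕ) (v : V) : V → ℕ :=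
  fun w => c w + numEdges src tgt v w - (if w = v then outdeg src v else 0)

/-- One legal firing move in the sinkless model. -/
def FireStep (src tgt : E → V) (c d : V → ℕ) : Prop :=
  ∃ v : V, outdeg src v ≤ c v ∧ d = fire src tgt c v

/-- `Reach c d`: `d` is obtained from `c` by a finite sequence of legal firing moves. -/
def Reach (src tgt : E → V) : (V → ℕ) → (V → ℕ) → Prop :=
  Relation.ReflTransGen (FireStep src tgt)

/-- Stability of a chip configuration. -/
def Stable (src : E → V) (c : V → ℕ) : Prop :=
  ∀ v : V, c v < outdeg src v

/-- A chip configuration is recurrent if it is not stable and every configuration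
accessible from it can reach it back. -/
def Recurrent (src tgt : E → V) (c : V → ℕ) : Prop :=
  ¬ Stable src c ∧ ∀ d : V → ℕ, Reach src tgt c d → Reach src tgt d c

/-- Level (total number of chips) of a chip configuration. -/
def lvl (c : V → ℕ) : ℕ := ∑ v : V, c v

/-- Indicator function of the vertex `s`. -/
def deltaS (s : V) : V → ℕ := fun v => if v = s then 1 else 0

/-- Result of firing the vertex `v` on an `s`-configuration. -/
def sfire (src tgt : E → V) (s : V) (c : {v : V // v ≠ s} → ℕ) (v : {v : V // v ≠ s}) :
    {v : V // v ≠ s} → ℕ :=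
  fun w => c w + numEdges src tgt v.1 w.1 - (if w = v then outdeg src v.1 else 0)

/-- One legal s-firing move. -/
def SFireStep (src tgt : E → V) (s : V) (c d : {v : V // v ≠ s} → ℕ) : Prop :=
  ∃ v : {v : V // v ≠ s}, outdeg src v.1 ≤ c v ∧ d = sfire src tgt s c v

/-- `SReach c d`: `d` is obtained from `c` by a finite sequence of legal s-firing moves. -/
def SReach (src tgt : E → V) (s : V) :
    ({v : V // v ≠ s} → ℕ) → ({v : V // v ≠ s} → ℕ) → Prop :=
  Relation.ReflTransGen (SFireStep src tgt s)

/-- Stability of an `s`-configuration. -/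
def SStable (src : E → V) (s : V) (c : {v : V // v ≠ s} → ℕ) : Prop :=
  ∀ v : {v : V // v ≠ s}, c v < outdeg src v.1

/-- The stabilization `c°` of an `s`-configuration: the (for strongly connected digraphs,
unique) stable `s`-configuration reachable from `c` by legal s-firing moves. -/
noncomputable def stab (src tgt : E → V) (s : V) (c : {v : V // v ≠ s} → ℕ) :
    {v : V // v ≠ s} → ℕ :=
  Classical.epsilon fun d => SReach src tgt s c d ∧ SStable src s d

/-- An `s`-configuration `c` is s-recurrent if every `s`-configuration can be completed
to one whose stabilization is `c`. -/
def SRecurrent (src tgt : E → V) (s : V) (c : {v : V // v ≠ s} → ℕ) : Prop :=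
  ∀ c₁ : {v : V // v ≠ s} → ℕ, ∃ c₂ : {v : V // v ≠ s} → ℕ,
    stab src tgt s (c₁ + c₂) = c

/-- `β_s`, recording the number of edges from `s` to each other vertex. -/
def betaS (src tgt : E → V) (s : V) : {v : V // v ≠ s} → ℕ :=
  fun v => numEdges src tgt s v.1

/-- The relation `~_s` on s-recurrent configurations: `d = (c + k·β_s)°` for some `k`. -/
def SEquiv (src tgt : E → V) (s : V) (c d : {v : V // v ≠ s} → ℕ) : Prop :=
  ∃ k : ℕ, stab src tgt s (c + k • betaS src tgt s) = d

/-- Restriction of a chip configuration to `V ∖ {s}`. -/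
def restrictS (s : V) (c : V → ℕ) : {v : V // v ≠ s} → ℕ := fun v => c v.1

/-- Extension `c̄` of an `s`-configuration by `0` at `s`. -/
def extendS (s : V) (c : {v : V // v ≠ s} → ℕ) : V → ℕ :=
  fun v => if h : v = s then 0 else c ⟨v, h⟩

/-- The s-index `χ(c)`: the least `k` such that `c̄ + k·δ_s` is recurrent. -/
noncomputable def sIndex (src tgt : E → V) (s : V) (c : {v : V // v ≠ s} → ℕ) : ℕ :=
  sInf {k : ℕ | Recurrent src tgt (extendS s c + k • deltaS s)}

/-- `φ(c) := c̄ + χ(c)·δ_s`. -/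
noncomputable def phi (src tgt : E → V) (s : V) (c : {v : V // v ≠ s} → ℕ) : V → ℕ :=
  extendS s c + sIndex src tgt s c • deltaS s

/-- The s-level `slvl(c) := χ(c) + Σ_{v ≠ s} c(v)`. -/
noncomputable def slvl (src tgt : E → V) (s : V) (c : {v : V // v ≠ s} → ℕ) : ℕ :=
  sIndex src tgt s c + ∑ v : {v : V // v ≠ s}, c v

/-- The d-level `dlvl(c) := deg⁺(s) + Σ_{v ≠ s} c(v)`. -/
def dlvl (src : E → V) (s : V) (c : {v : V // v ≠ s} → ℕ) : ℕ :=
  outdeg src s + ∑ v : {v : V // v ≠ s}, c v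

/-- The set (as a type) of recurrent chip configurations. -/
abbrev RecL (src tgt : E → V) := {c : V → ℕ // Recurrent src tgt c}

/-- The setoid on recurrent configurations generated by the relation `~` (i.e. `⤳`). -/
def recLSetoid (src tgt : E → V) : Setoid (RecL src tgt) :=
  Relation.EqvGen.setoid fun a b => Reach src tgt a.1 b.1

/-- The set of `~`-classes of recurrent configurations. -/
abbrev RecLQuot (src tgt : E → V) := Quotient (recLSetoid src tgt)

/-- The set (as a type) of s-recurrent configurations. -/
abbrev RecS (src tgt : E → V) (s : V) := {c : {v : V // v ≠ s} → ℕ // SRecurrent src tgt s c}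

/-- The setoid on s-recurrent configurations generated by the relation `~_s`. -/
def recSSetoid (src tgt : E → V) (s : V) : Setoid (RecS src tgt s) :=
  Relation.EqvGen.setoid fun a b => SEquiv src tgt s a.1 b.1

/-- The set of `~_s`-classes of s-recurrent configurations. -/
abbrev RecSQuot (src tgt : E → V) (s : V) := Quotient (recSSetoid src tgt s)

/-- The level of a `~`-class of recurrent configurations (level is constant on classes). -/
noncomputable def lvlClass (src tgt : E → V) (q : RecLQuot src tgt) : ℕ :=
  sSup ((fun c : RecL src tgt => lvl c.1) '' {c | Quotient.mk (recLSetoid src tgt) c = q})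

/-- The s-level of a `~_s`-class (s-level is constant on classes). -/
noncomputable def slvlClass (src tgt : E → V) (s : V) (q : RecSQuot src tgt s) : ℕ :=
  sSup ((fun c : RecS src tgt s => slvl src tgt s c.1) ''
    {c | Quotient.mk (recSSetoid src tgt s) c = q})

/-- The d-level of a `~_s`-class: the maximum d-level over the class. -/
noncomputable def dlvlClass (src tgt : E → V) (s : V) (q : RecSQuot src tgt s) : ℕ :=
  sSup ((fun c : RecS src tgt s => dlvl src s c.1) ''
    {c | Quotient.mk (recSSetoid src tgt s) c = q})

/-- The Biggs–Merino polynomial `B(G,s;y) = Σ_{[c] ∈ Rec(G,s)/~_s} y^{dlvl([c])}`. -/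
noncomputable def BM (src tgt : E → V) (s : V) : Polynomial ℤ :=
  ∑ᶠ q : RecSQuot src tgt s, X ^ dlvlClass src tgt s q

/-- `LegalSeq l c d`: firing the vertices in the list `l` in order is a sequence of
legal firing moves transforming `c` into `d` (sinkless model). -/
def LegalSeq (src tgt : E → V) : List V → (V → ℕ) → (V → ℕ) → Prop
  | [], c, d => d = c
  | v :: l, c, d => outdeg src v ≤ c v ∧ LegalSeq src tgt l (fire src tgt c v) d

/-- `SLegalSeq l c d`: firing the vertices in the list `l` in order is a sequence of
legal s-firing moves transforming `c` into `d`. -/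
def SLegalSeq (src tgt : E → V) (s : V) :
    List {v : V // v ≠ s} → ({v : V // v ≠ s} → ℕ) → ({v : V // v ≠ s} → ℕ) → Prop
  | [], c, d => d = c
  | v :: l, c, d => outdeg src v.1 ≤ c v ∧ SLegalSeq src tgt s l (sfire src tgt s c v) d

/-- The configuration obtained from `c` after firing the vertices of `l` in order. -/
def iterFire (src tgt : E → V) (c : V → ℕ) (l : List V) : V → ℕ :=
  l.foldl (fire src tgt) c

/-- The Laplacian of the digraph applied to an integer vector:
`(Δq)(v) = deg⁺(v)·q(v) − Σ_w A(w,v)·q(w)`. -/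
def lapApply (src tgt : E → V) (q : V → ℤ) : V → ℤ :=
  fun v => (outdeg src v : ℤ) * q v - ∑ w : V, (numEdges src tgt w v : ℤ) * q w

/-- `r` is the primitive period vector of the digraph: it has positive entries with
gcd `1`, lies in the kernel of the Laplacian, and generates this kernel. -/
def IsPeriodVector (src tgt : E → V) (r : V → ℕ) : Prop :=
  (∀ v : V, 0 < r v) ∧ Finset.univ.gcd r = 1 ∧
    lapApply src tgt (fun v => (r v : ℤ)) = 0 ∧
    ∀ q : V → ℤ, lapApply src tgt q = 0 → ∃ k : ℤ, q = k • fun v => (r v : ℤ)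

/-- The Laplacian matrix of the digraph. -/
def lapMatrix (src tgt : E → V) : Matrix V V ℤ :=
  Matrix.of fun v w =>
    if v = w then (outdeg src v : ℤ) - numEdges src tgt v v
    else -(numEdges src tgt w v : ℤ)

/-- The determinant of the reduced Laplacian obtained by deleting the row and
column indexed by `v`. -/
def reducedLapDet (src tgt : E → V) (v : V) : ℤ :=
  (((lapMatrix src tgt).submatrix (fun a : {w : V // w ≠ v} => a.1)
    (fun a : {w : V // w ≠ v} => a.1)).det)

/-- The period constant `α := gcd_{v ∈ V} det Δ_v`. -/
def periodConstant (src tgt : E → V) : ℤ :=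
  Finset.univ.gcd (reducedLapDet src tgt)

/-- `IsWalk l a b`: the list of edges `l` forms a directed walk from `a` to `b`. -/
def IsWalk (src tgt : E → V) : List E → V → V → Prop
  | [], a, b => a = b
  | e :: l, a, b => src e = a ∧ IsWalk src tgt l (tgt e) b

/-- `IsPath l a b`: the list of edges `l` forms a directed path from `a` to `b`:
all visited vertices are distinct (except that the final vertex is allowed to
coincide with the starting vertex). -/
def IsPath (src tgt : E → V) (l : List E) (a b : V) : Prop :=
  IsWalk src tgt l a b ∧ (l.map tgt).Nodup ∧ a ∉ (l.map tgt).dropLast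

/-- `T` is an arborescence rooted at `s`: for every vertex `v` there is a unique
directed path from `s` to `v` using only edges of `T`. -/
def IsArborescence (src tgt : E → V) (s : V) (T : Finset E) : Prop :=
  ∀ v : V, ∃! l : List E, (∀ e ∈ l, e ∈ T) ∧ IsPath src tgt l s v

/-- The edge `e ∉ T` is externally active for the arborescence `T` (w.r.t. the linear
order on `E`): where `P₁`, `P₂` are the two edge-disjoint directed paths in `T ∪ {e}`
sharing their starting vertex and ending at `tgt e`, with `e ∈ P₁`, the smallest edge
on `P₁ ++ P₂` lies on `P₁`. -/
def ExtActive [LinearOrder E] (src tgt : E → V) (T : Finset E) (e : E) : Prop :=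
  e ∉ T ∧ ∃ (u : V) (p₁ p₂ : List E),
    (∀ f ∈ p₁, f ∈ T ∨ f = e) ∧ (∀ f ∈ p₂, f ∈ T ∨ f = e) ∧
    IsPath src tgt p₁ u (tgt e) ∧ IsPath src tgt p₂ u (tgt e) ∧
    e ∈ p₁ ∧ (∀ f ∈ p₁, f ∉ p₂) ∧
    ∃ fmin ∈ p₁, ∀ f ∈ p₁ ++ p₂, fmin ≤ f

/-- The external activity `e(T)` of an arborescence `T`. -/
noncomputable def extActivity [LinearOrder E] (src tgt : E → V) (T : Finset E) : ℕ :=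
  Nat.card {e : E // ExtActive src tgt T e}

/-- The greedoid Tutte polynomial `T(G,s;y) = Σ_{T ∈ A(G,s)} y^{e(T)}`. -/
noncomputable def greedoidTutte [LinearOrder E] (src tgt : E → V) (s : V) : Polynomial ℤ :=
  ∑ᶠ T : {T : Finset E // IsArborescence src tgt s T}, X ^ extActivity src tgt T.1

/-- `f` is a `G^r`-parking function rooted at `s`. -/
def IsParking (src tgt : E → V) (s : V) (f : {v : V // v ≠ s} → ℕ) : Prop :=
  ∀ A : Finset {v : V // v ≠ s}, A.Nonempty →
    ∃ v ∈ A, f v < Nat.card {e : E // (∀ w ∈ A, src e ≠ w.1) ∧ tgt e = v.1}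

/-- The d-level of a `G^r`-parking function: `|E| − |V| + 1 − Σ_{v≠s} f(v)`. -/
noncomputable def parkDlvl (src : E → V) (s : V) (f : {v : V // v ≠ s} → ℕ) : ℕ :=
  ((Fintype.card E : ℤ) - Fintype.card V + 1 - ∑ v : {v : V // v ≠ s}, (f v : ℤ)).toNat

/-- `σ` is an s-decreasing traversal: a sequence in which every vertex and edge of `G`
appears exactly once, satisfying (R1) every vertex other than `s` is immediately
preceded by an edge targeting it, and (R2) every edge is the `<ₑ`-maximum edge not yet
seen whose source has been seen. -/
def IsTraversal [LinearOrder E] (src tgt : E → V) (s : V) (σ : List (V ⊕ E)) : Prop :=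
  σ.Nodup ∧ (∀ x : V ⊕ E, x ∈ σ) ∧
  (∀ (i : ℕ) (hi : i < σ.length) (v : V),
      σ.get ⟨i, hi⟩ = Sum.inl v → v ≠ s →
      0 < i ∧ ∃ e : E, tgt e = v ∧ σ.get ⟨i - 1, by omega⟩ = Sum.inr e) ∧
  (∀ (i : ℕ) (hi : i < σ.length) (e : E),
      σ.get ⟨i, hi⟩ = Sum.inr e →
      Sum.inl (src e) ∈ σ.take i ∧
      ∀ f : E, Sum.inr f ∉ σ.take i → Sum.inl (src f) ∈ σ.take i → f ≤ e)

open scoped Classical in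
/-- `Υ(σ)`: the set of edges immediately preceding a non-sink vertex in `σ`. -/
noncomputable def Upsilon (src tgt : E → V) (s : V) (σ : List (V ⊕ E)) : Finset E :=
  Finset.univ.filter fun e =>
    ∃ (i : ℕ) (hi : i < σ.length) (v : V), v ≠ s ∧ σ.get ⟨i, hi⟩ = Sum.inl v ∧
      0 < i ∧ ∃ hj : i - 1 < σ.length, σ.get ⟨i - 1, hj⟩ = Sum.inr e

/-- The strength of `σ`: the number of strong edges, i.e. edges whose target appears
before them in `σ`. -/
noncomputable def strength (tgt : E → V) (σ : List (V ⊕ E)) : ℕ :=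
  Nat.card {e : E // ∃ (i : ℕ) (hi : i < σ.length),
    σ.get ⟨i, hi⟩ = Sum.inr e ∧ Sum.inl (tgt e) ∈ σ.take i}

/-- `Ψ(σ)(v)`: one less than the number of edges targeting `v` that appear before the
vertex `v` in `σ`. -/
def Psi (tgt : E → V) (s : V) (σ : List (V ⊕ E)) : {v : V // v ≠ s} → ℕ :=
  fun v =>
    (((σ.takeWhile fun x => x ≠ Sum.inl v.1).filterMap Sum.getRight?).filter
      fun e => tgt e = v.1).length - 1


set_option linter.unusedSectionVars false

/-- The reduced Laplacian. -/
abbrev Lmat (src tgt : E → V) (s : V) : Matrix {v : V // v ≠ s} {v : V // v ≠ s} ℤ :=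
  (lapMatrix src tgt).submatrix (fun a : {w : V // w ≠ s} => a.1)
    (fun a : {w : V // w ≠ s} => a.1)

/-- Image lattice of an integer matrix. -/
def imM {m n : Type} [Fintype n] (A : Matrix m n ℤ) : AddSubgroup (m → ℤ) :=
  A.mulVecLin.toAddMonoidHom.range

lemma mem_imM {m n : Type} [Fintype n] (A : Matrix m n ℤ) (x : m → ℤ) :
    x ∈ imM A ↔ ∃ q : n → ℤ, A.mulVec q = x := by
  simp [imM, AddMonoidHom.mem_range]

lemma index_imM {n : Type} [Fintype n] [DecidableEq n] (A : Matrix n n ℤ) (h : A.det ≠ 0) :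
    (imM A).index = A.det.natAbs := by
  have hinj : Function.Injective A.mulVecLin := by
    intro x y hxy
    exact (Matrix.mulVec_injective_of_det_ne_zero h) hxy
  have := Submodule.natAbs_det_equiv (LinearMap.range A.mulVecLin)
    (LinearEquiv.ofInjective A.mulVecLin hinj)
  have e : (LinearMap.range A.mulVecLin).subtype ∘ₗ
      ((LinearEquiv.ofInjective A.mulVecLin hinj : _ ≃ₗ[ℤ] _) : _ →ₗ[ℤ] _) = A.mulVecLin := by
    ext; rfl
  have h2 : (LinearMap.det A.mulVecLin) = A.det := by
    rw [← Matrix.toLin'_apply', LinearMap.det_toLin']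
  rw [← h2, ← e]
  exact this.symm

lemma lap_apply (src tgt : E → V) (v w : V) : lapMatrix src tgt v w =
    (if v = w then (outdeg src w : ℤ) else 0) - (numEdges src tgt w v : ℤ) := by
  unfold lapMatrix
  by_cases h : v = w
  · subst h; simp
  · simp [h]

lemma outdeg_eq (src tgt : E → V) (v : V) : outdeg src v = ∑ w, numEdges src tgt v w := by
  unfold outdeg numEdges
  rw [Finset.card_eq_sum_card_fiberwise (f := tgt) (t := Finset.univ) (by simp)]
  simp [Finset.filter_filter]

lemma lap_colsum (src tgt : E → V) (w : V) : ∑ v, lapMatrix src tgt v w = 0 := by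
  simp_rw [lap_apply, Finset.sum_sub_distrib]
  rw [outdeg_eq src tgt]
  simp

lemma max_principle (src tgt : E → V) (hG : StronglyConnected src tgt) (s : V) (X : V → ℤ)
    (hs : X s = 0)
    (h : ∀ v, v ≠ s → (outdeg src v : ℤ) * X v ≤ ∑ w, (numEdges src tgt v w : ℤ) * X w) :
    ∀ v, X v ≤ 0 := by
  obtain ⟨u, -, hu⟩ := Finset.exists_max_image (Finset.univ : Finset V) X ⟨s, Finset.mem_univ _⟩
  by_contra! hc
  obtain ⟨v0, hv0⟩ := hc
  have hpos : 0 < X u := lt_of_lt_of_le hv0 (hu v0 (Finset.mem_univ _))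
  have key : ∀ b, Relation.ReflTransGen (fun a b => ∃ e : E, src e = a ∧ tgt e = b) u b →
      X b = X u := by
    intro b hb
    induction hb with
    | refl => rfl
    | @tail a b _ hab ih =>
      obtain ⟨e, he1, he2⟩ := hab
      have ha : a ≠ s := by
        rintro rfl
        omega
      have h1 := h a ha
      rw [outdeg_eq src tgt, Nat.cast_sum, Finset.sum_mul, ih] at h1
      have h2 : ∑ w, (numEdges src tgt a w : ℤ) * (X u - X w) ≤ 0 := by
        simp_rw [mul_sub, Finset.sum_sub_distrib]
        linarith
      have h3 : ∀ w ∈ (Finset.univ : Finset V),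
          0 ≤ (numEdges src tgt a w : ℤ) * (X u - X w) := fun w _ =>
        mul_nonneg (by positivity) (by linarith [hu w (Finset.mem_univ _)])
      have h4 := (Finset.sum_eq_zero_iff_of_nonneg h3).1
        (le_antisymm h2 (Finset.sum_nonneg h3)) b (Finset.mem_univ _)
      have h5 : 0 < numEdges src tgt a b := by
        unfold numEdges
        exact Finset.card_pos.2 ⟨e, by simp [he1, he2]⟩
      rcases mul_eq_zero.1 h4 with h6 | h6
      · omega
      · omega
  have := key s (hG u s)
  omega

/-- Extension by zero. -/
def extZ (s : V) (x : {v : V // v ≠ s} → ℤ) (k : ℤ) : V → ℤ :=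
  fun v => if h : v = s then k else x ⟨v, h⟩

@[simp] lemma extZ_s (s : V) (x : {v : V // v ≠ s} → ℤ) (k : ℤ) : extZ s x k s = k := by
  simp [extZ]

@[simp] lemma extZ_ne (s : V) (x : {v : V // v ≠ s} → ℤ) (k : ℤ) (v : {v : V // v ≠ s}) :
    extZ s x k v.1 = x v := by
  simp [extZ, v.2]

lemma sum_split (s : V) (f : V → ℤ) : ∑ v, f v = f s + ∑ v : {v : V // v ≠ s}, f v.1 := by
  rw [← Fintype.sum_subtype_add_sum_subtype (fun v => v = s) f]
  simp
  rfl

lemma vecMul_L (src tgt : E → V) (s : V) (x : {v : V // v ≠ s} → ℤ) (v : {v : V // v ≠ s}) :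
    Matrix.vecMul x (Lmat src tgt s) v = (outdeg src v.1 : ℤ) * extZ s x 0 v.1 -
      ∑ w, (numEdges src tgt v.1 w : ℤ) * extZ s x 0 w := by
  rw [sum_split s]
  simp only [Matrix.vecMul, dotProduct, Matrix.submatrix_apply, lap_apply, extZ_s, extZ_ne]
  simp_rw [mul_sub, Finset.sum_sub_distrib, Subtype.val_inj]
  simp [mul_comm]

lemma L_det_ne_zero (src tgt : E → V) (hG : StronglyConnected src tgt) (s : V) :
    (Lmat src tgt s).det ≠ 0 := by
  intro h0
  obtain ⟨x, hx0, hx⟩ := Matrix.exists_vecMul_eq_zero_iff.2 h0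
  apply hx0
  have e : ∀ v : V, v ≠ s → (outdeg src v : ℤ) * extZ s x 0 v =
      ∑ w, (numEdges src tgt v w : ℤ) * extZ s x 0 w := by
    intro v hv
    have := vecMul_L src tgt s x ⟨v, hv⟩
    rw [hx] at this
    simp only [Pi.zero_apply] at this
    linarith
  have h1 := max_principle src tgt hG s (extZ s x 0) (by simp) (fun v hv => (e v hv).le)
  have h2 := max_principle src tgt hG s (fun v => - extZ s x 0 v) (by simp) (fun v hv => by
    simp only [mul_neg, Finset.sum_neg_distrib]
    exact (neg_le_neg_iff.2 (e v hv).ge))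
  funext v
  have a1 := h1 v.1
  have a2 := h2 v.1
  simp only [extZ_ne] at a1 a2
  simp only [Pi.zero_apply]
  omega

lemma exists_weight (src tgt : E → V) (hG : StronglyConnected src tgt) (s : V) :
    ∃ h : {v : V // v ≠ s} → ℕ, ∀ v,
      0 < ∑ w, (h w : ℤ) * Lmat src tgt s w v := by
  have hd := L_det_ne_zero src tgt hG s
  set D := (Lmat src tgt s).det with hD
  let x : {v : V // v ≠ s} → ℤ := Matrix.vecMul (fun _ => D) (Lmat src tgt s).adjugate
  have hx : Matrix.vecMul x (Lmat src tgt s) = fun _ => D * D := by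
    simp only [x, Matrix.vecMul_vecMul, Matrix.adjugate_mul]
    funext v
    simp [← hD]
  have hp : 0 < D * D := mul_self_pos.2 hd
  have h2 := max_principle src tgt hG s (fun v => - extZ s x 0 v) (by simp) (fun v hv => by
    have := vecMul_L src tgt s x ⟨v, hv⟩
    rw [hx] at this
    simp only [mul_neg, Finset.sum_neg_distrib]
    simp only at this
    linarith)
  refine ⟨fun v => (x v).toNat, fun v => ?_⟩
  have h3 : ∀ w, (((x w).toNat : ℕ) : ℤ) = x w := fun w => by
    have := h2 w.1
    simp only [extZ_ne] at this
    omega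
  simp_rw [h3]
  have := congrFun hx v
  simp only [Matrix.vecMul, dotProduct] at this
  rw [this]; exact hp


/-- Integer-valued version of a configuration. -/
def toZ {s : V} (c : {v : V // v ≠ s} → ℕ) : {v : V // v ≠ s} → ℤ := fun v => (c v : ℤ)

lemma toZ_add {s : V} (c d : {v : V // v ≠ s} → ℕ) : toZ (c + d) = toZ c + toZ d := by
  funext v; simp [toZ]

lemma toZ_inj {s : V} {c d : {v : V // v ≠ s} → ℕ} (h : toZ c = toZ d) : c = d := by
  funext v; have := congrFun h v; simpa [toZ] using this

lemma sfire_toZ (src tgt : E → V) (s : V) (c : {v : V // v ≠ s} → ℕ) (v : {v : V // v ≠ s})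
    (h : outdeg src v.1 ≤ c v) (w : {v : V // v ≠ s}) :
    (sfire src tgt s c v w : ℤ) = c w - Lmat src tgt s w v := by
  simp only [sfire, Matrix.submatrix_apply, lap_apply, Subtype.val_inj]
  by_cases hw : w = v
  · subst hw
    simp only [if_true]
    omega
  · simp only [if_neg hw]
    omega

lemma step_add {src tgt : E → V} {s : V} {c d : {v : V // v ≠ s} → ℕ}
    (h : SFireStep src tgt s c d) (e : {v : V // v ≠ s} → ℕ) :
    SFireStep src tgt s (c + e) (d + e) := by
  obtain ⟨v, hv, rfl⟩ := h
  have hv' : outdeg src v.1 ≤ (c + e) v := by simp only [Pi.add_apply]; omega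
  refine ⟨v, hv', toZ_inj ?_⟩
  funext w
  have h1 := sfire_toZ src tgt s c v hv w
  have h2 := sfire_toZ src tgt s (c + e) v hv' w
  simp only [toZ, Pi.add_apply] at *
  push_cast at *
  linarith

lemma reach_add {src tgt : E → V} {s : V} {c d : {v : V // v ≠ s} → ℕ}
    (h : SReach src tgt s c d) (e : {v : V // v ≠ s} → ℕ) :
    SReach src tgt s (c + e) (d + e) := by
  induction h with
  | refl => exact Relation.ReflTransGen.refl
  | tail _ h2 ih => exact ih.tail (step_add h2 e)

lemma step_mem {src tgt : E → V} {s : V} {c d : {v : V // v ≠ s} → ℕ}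
    (h : SFireStep src tgt s c d) : toZ c - toZ d ∈ imM (Lmat src tgt s) := by
  obtain ⟨v, hv, rfl⟩ := h
  refine (mem_imM _ _).2 ⟨Pi.single v 1, ?_⟩
  funext w
  have h1 := sfire_toZ src tgt s c v hv w
  rw [Matrix.mulVec_single_one]
  simp only [toZ, Pi.sub_apply, h1, Matrix.col_apply]
  ring

lemma reach_mem {src tgt : E → V} {s : V} {c d : {v : V // v ≠ s} → ℕ}
    (h : SReach src tgt s c d) : toZ c - toZ d ∈ imM (Lmat src tgt s) := by
  induction h with
  | refl => simp [AddSubgroup.zero_mem]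
  | tail _ h2 ih =>
    have := AddSubgroup.add_mem _ ih (step_mem h2)
    simpa using this

lemma diamond {src tgt : E → V} {s : V} (a b c : {v : V // v ≠ s} → ℕ)
    (hb : SFireStep src tgt s a b) (hc : SFireStep src tgt s a c) :
    ∃ d, Relation.ReflGen (SFireStep src tgt s) b d ∧
      Relation.ReflTransGen (SFireStep src tgt s) c d := by
  obtain ⟨v, hv, rfl⟩ := hb
  obtain ⟨w, hw, rfl⟩ := hc
  by_cases hvw : v = w
  · subst hvw
    exact ⟨_, Relation.ReflGen.refl, Relation.ReflTransGen.refl⟩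
  · have h1 : outdeg src w.1 ≤ sfire src tgt s a v w := by
      simp only [sfire, if_neg (Ne.symm hvw)]; omega
    have h2 : outdeg src v.1 ≤ sfire src tgt s a w v := by
      simp only [sfire, if_neg hvw]; omega
    refine ⟨sfire src tgt s (sfire src tgt s a v) w, Relation.ReflGen.single ⟨w, h1, rfl⟩,
      Relation.ReflTransGen.single ⟨v, h2, toZ_inj ?_⟩⟩
    funext u
    simp only [toZ]
    rw [sfire_toZ src tgt s _ _ h1, sfire_toZ src tgt s _ _ h2, sfire_toZ src tgt s _ _ hv,
      sfire_toZ src tgt s _ _ hw]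
    ring

lemma stable_reach {src tgt : E → V} {s : V} {c d : {v : V // v ≠ s} → ℕ}
    (hc : SStable src s c) (h : SReach src tgt s c d) : d = c := by
  rcases Relation.ReflTransGen.cases_head h with h1 | ⟨e, ⟨v, hv, _⟩, _⟩
  · exact h1.symm
  · exact absurd hv (not_le.2 (hc v))

lemma stab_unique {src tgt : E → V} {s : V} {c d e : {v : V // v ≠ s} → ℕ}
    (hd : SReach src tgt s c d) (hd' : SStable src s d)
    (he : SReach src tgt s c e) (he' : SStable src s e) : d = e := by
  obtain ⟨f, h1, h2⟩ := Relation.church_rosser diamond hd he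
  rw [← stable_reach hd' h1, ← stable_reach he' h2]

lemma exists_stab (src tgt : E → V) (hG : StronglyConnected src tgt) (s : V)
    (c : {v : V // v ≠ s} → ℕ) : ∃ d, SReach src tgt s c d ∧ SStable src s d := by
  obtain ⟨h, hh⟩ := exists_weight src tgt hG s
  generalize hn : ∑ w, h w * c w = n
  induction n using Nat.strong_induction_on generalizing c with
  | _ n ih =>
    by_cases hc : SStable src s c
    · exact ⟨c, Relation.ReflTransGen.refl, hc⟩
    · simp only [SStable, not_forall, not_lt] at hc
      obtain ⟨v, hv⟩ := hc
      have hlt : ∑ w, h w * sfire src tgt s c v w < n := by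
        zify
        rw [← hn]
        simp_rw [sfire_toZ src tgt s c v hv, mul_sub, Finset.sum_sub_distrib]
        push_cast
        linarith [hh v]
      obtain ⟨d, hd1, hd2⟩ := ih _ hlt _ rfl
      exact ⟨d, Relation.ReflTransGen.head ⟨v, hv, rfl⟩ hd1, hd2⟩

section
variable {src tgt : E → V} (hG : StronglyConnected src tgt) {s : V}

lemma stab_spec (hG : StronglyConnected src tgt) (c : {v : V // v ≠ s} → ℕ) :
    SReach src tgt s c (stab src tgt s c) ∧ SStable src s (stab src tgt s c) :=
  Classical.epsilon_spec (exists_stab src tgt hG s c)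

lemma stab_eq_of_reach (hG : StronglyConnected src tgt) {c d : {v : V // v ≠ s} → ℕ}
    (h : SReach src tgt s c d) :
    stab src tgt s c = stab src tgt s d :=
  stab_unique (stab_spec hG c).1 (stab_spec hG c).2 (h.trans (stab_spec hG d).1) (stab_spec hG d).2

lemma stab_add (hG : StronglyConnected src tgt) (c e : {v : V // v ≠ s} → ℕ) :
    stab src tgt s (stab src tgt s c + e) = stab src tgt s (c + e) :=
  (stab_eq_of_reach hG (reach_add (stab_spec hG c).1 e)).symm

lemma stab_mem (hG : StronglyConnected src tgt) (c : {v : V // v ≠ s} → ℕ) :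
    toZ c - toZ (stab src tgt s c) ∈ imM (Lmat src tgt s) :=
  reach_mem (stab_spec hG c).1

/-- Configurations differing by `z` with large entries have the same stabilization. -/
def PZ (src tgt : E → V) (s : V) (z : {v : V // v ≠ s} → ℤ) : Prop :=
  ∃ N : ℕ, ∀ c d : {v : V // v ≠ s} → ℕ, (∀ v, N ≤ c v) → (∀ v, N ≤ d v) →
    toZ c - toZ d = z → stab src tgt s c = stab src tgt s d

lemma PZ_neg {z : {v : V // v ≠ s} → ℤ} (h : PZ src tgt s z) : PZ src tgt s (-z) := by
  obtain ⟨N, hN⟩ := h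
  refine ⟨N, fun c d hc hd h => (hN d c hd hc ?_).symm⟩
  rw [← neg_eq_iff_eq_neg.2 h.symm.symm]; simp

lemma PZ_add {y z : {v : V // v ≠ s} → ℤ} (hy : PZ src tgt s y) (hz : PZ src tgt s z) :
    PZ src tgt s (y + z) := by
  obtain ⟨N, hN⟩ := hy
  obtain ⟨M, hM⟩ := hz
  refine ⟨N + M + ∑ v, (y v).natAbs, fun c d hc hd h => ?_⟩
  have hb : ∀ v, (y v).natAbs ≤ ∑ v, (y v).natAbs := fun v =>
    Finset.single_le_sum (f := fun v => (y v).natAbs) (fun _ _ => Nat.zero_le _) (Finset.mem_univ v)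
  let m : {v : V // v ≠ s} → ℕ := fun v => ((c v : ℤ) - y v).toNat
  have hm : ∀ v, (m v : ℤ) = c v - y v ∧ N + M ≤ m v := fun v => by
    have h1 := hb v
    have h2 := hc v
    simp only [m]
    omega
  have e1 : toZ c - toZ m = y := by
    funext v
    have := (hm v).1
    simp only [toZ, Pi.sub_apply]; omega
  have e2 : toZ m - toZ d = z := by
    have : toZ c - toZ d - (toZ c - toZ m) = z := by rw [h, e1]; simp
    rw [← this]; abel
  rw [hN c m (fun v => by have := hc v; omega) (fun v => by have := (hm v).2; omega) e1]
  exact hM m d (fun v => by have := (hm v).2; omega) (fun v => by have := hd v; omega) e2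

lemma PZ_col (hG : StronglyConnected src tgt) (v : {v : V // v ≠ s}) :
    PZ src tgt s ((Lmat src tgt s).col v) := by
  refine ⟨outdeg src v.1, fun c d hc hd h => stab_eq_of_reach hG
    (Relation.ReflTransGen.single ⟨v, hc v, toZ_inj ?_⟩)⟩
  funext w
  have := congrFun h w
  simp only [toZ, Pi.sub_apply, Matrix.col_apply] at *
  rw [sfire_toZ src tgt s c v (hc v)]
  linarith

lemma PZ_of_mem (hG : StronglyConnected src tgt) {z : {v : V // v ≠ s} → ℤ}
    (hz : z ∈ imM (Lmat src tgt s)) : PZ src tgt s z := by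
  have h1 : z ∈ AddSubgroup.closure (Set.range (Lmat src tgt s).col) := by
    rw [← Submodule.span_int_eq_addSubgroupClosure, ← Matrix.range_mulVecLin]
    exact hz
  induction h1 using AddSubgroup.closure_induction with
  | mem x hx => obtain ⟨v, rfl⟩ := hx; exact PZ_col hG v
  | zero => exact ⟨0, fun c d _ _ h => by rw [toZ_inj (sub_eq_zero.1 h)]⟩
  | add x y hx hy ihx ihy =>
    have key : ∀ x, x ∈ AddSubgroup.closure (Set.range (Lmat src tgt s).col) →
        x ∈ imM (Lmat src tgt s) := by
      intro x hx
      rw [← Submodule.span_int_eq_addSubgroupClosure, ← Matrix.range_mulVecLin] at hx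
      exact hx
    exact PZ_add (ihx (key x hx)) (ihy (key y hy))
  | neg x hx ih => exact PZ_neg (ih (by simpa using AddSubgroup.neg_mem _ hz))

/-- An element of the trivial class that acts trivially on recurrent configurations. -/
lemma exists_E (hG : StronglyConnected src tgt) : ∃ e : {v : V // v ≠ s} → ℕ, (∀ v, 1 ≤ e v) ∧
    ∀ c, SRecurrent src tgt s c → stab src tgt s (c + e) = c := by
  let n : {v : V // v ≠ s} → ℕ := fun v => 2 * outdeg src v.1
  have hst := (stab_spec (s := s) hG n).2
  refine ⟨fun v => n v - stab src tgt s n v, fun v => ?_, fun c hc => ?_⟩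
  · have := hst v
    simp only [n] at *
    omega
  · obtain ⟨c2, rfl⟩ := hc n
    rw [stab_add hG]
    set e : {v : V // v ≠ s} → ℕ := fun v => n v - stab src tgt s n v with he
    have : n + c2 + e = n + (c2 + e) := by abel
    rw [this, ← stab_add hG]
    congr 1
    funext v
    have := hst v
    simp only [he, Pi.add_apply, n] at *
    omega

lemma rec_inj (hG : StronglyConnected src tgt) {c d : {v : V // v ≠ s} → ℕ}
    (hc : SRecurrent src tgt s c) (hd : SRecurrent src tgt s d)
    (h : toZ c - toZ d ∈ imM (Lmat src tgt s)) : c = d := by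
  obtain ⟨e, he1, he2⟩ := exists_E (s := s) hG
  have hm : ∀ (m : ℕ) c, SRecurrent src tgt s c → stab src tgt s (c + m • e) = c := by
    intro m c hc
    induction m with
    | zero =>
      obtain ⟨c2, h2⟩ := hc 0
      have h3 := (stab_spec (s := s) hG (0 + c2)).2
      rw [h2] at h3
      simp only [zero_smul, add_zero]
      exact stable_reach h3 (stab_spec hG c).1
    | succ m ih =>
      have : c + (m + 1) • e = (c + m • e) + e := by rw [succ_nsmul]; abel
      rw [this, ← stab_add hG, ih, he2 c hc]
  obtain ⟨N, hN⟩ := PZ_of_mem hG h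
  have hle : ∀ (c : {v : V // v ≠ s} → ℕ) v, N ≤ (c + N • e) v := by
    intro c v
    have := he1 v
    simp only [Pi.add_apply, Pi.smul_apply, smul_eq_mul]
    nlinarith
  rw [← hm N c hc, ← hm N d hd]
  refine hN _ _ (hle c) (hle d) ?_
  rw [toZ_add, toZ_add]; abel

lemma rec_add (hG : StronglyConnected src tgt) {c : {v : V // v ≠ s} → ℕ}
    (hc : SRecurrent src tgt s c) (e : {v : V // v ≠ s} → ℕ) :
    SRecurrent src tgt s (stab src tgt s (c + e)) := by
  intro c1
  obtain ⟨c2, h2⟩ := hc c1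
  refine ⟨c2 + e, ?_⟩
  rw [← h2, stab_add hG, add_assoc]

lemma rec_of_ge (hG : StronglyConnected src tgt) {b : {v : V // v ≠ s} → ℕ}
    (hb : ∀ v, outdeg src v.1 ≤ b v) : SRecurrent src tgt s (stab src tgt s b) := by
  intro c1
  have hst := (stab_spec (s := s) hG c1).2
  refine ⟨fun v => b v - stab src tgt s c1 v, ?_⟩
  rw [← stab_add hG]
  congr 1
  funext v
  have h1 := hst v
  have h2 := hb v
  simp only [Pi.add_apply]
  omega

lemma det_smul_mem (z : {v : V // v ≠ s} → ℤ) :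
    (Lmat src tgt s).det • z ∈ imM (Lmat src tgt s) := by
  refine (mem_imM _ _).2 ⟨(Lmat src tgt s).adjugate.mulVec z, ?_⟩
  rw [Matrix.mulVec_mulVec, Matrix.mul_adjugate]
  simp [Matrix.smul_mulVec]

lemma abs_det_smul_mem (z : {v : V // v ≠ s} → ℤ) :
    ((Lmat src tgt s).det.natAbs : ℤ) • z ∈ imM (Lmat src tgt s) := by
  rcases Int.natAbs_eq (Lmat src tgt s).det with h | h
  · rw [← h]; exact det_smul_mem z
  · have := AddSubgroup.neg_mem _ (det_smul_mem (src := src) (tgt := tgt) z)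
    rw [h] at this
    simpa using this

lemma exists_rec (hG : StronglyConnected src tgt) (z : {v : V // v ≠ s} → ℤ) :
    ∃ c, SRecurrent src tgt s c ∧ toZ c - z ∈ imM (Lmat src tgt s) := by
  set D := (Lmat src tgt s).det.natAbs with hD
  have hDpos : 1 ≤ D := Int.natAbs_pos.2 (L_det_ne_zero src tgt hG s)
  let y : {v : V // v ≠ s} → ℤ := fun v => (z v).natAbs + outdeg src v.1
  let b : {v : V // v ≠ s} → ℕ := fun v => (z v + D * y v).toNat
  have hb : ∀ v, (b v : ℤ) = z v + D * y v ∧ outdeg src v.1 ≤ b v := by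
    intro v
    have h1 : y v ≤ D * y v := by
      have : 0 ≤ y v := by simp only [y]; omega
      have hD' : (1 : ℤ) ≤ D := by exact_mod_cast hDpos
      nlinarith
    have h2 : (y v : ℤ) = (z v).natAbs + outdeg src v.1 := rfl
    simp only [b]
    generalize (D : ℤ) * y v = t at *
    omega
  refine ⟨stab src tgt s b, rec_of_ge hG (fun v => (hb v).2), ?_⟩
  have h1 := AddSubgroup.neg_mem _ (stab_mem hG b)
  have h2 := abs_det_smul_mem (src := src) (tgt := tgt) y
  have h3 : toZ b = z + (D : ℤ) • y := by
    funext v; simp [toZ, (hb v).1]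
  have := AddSubgroup.add_mem _ h1 h2
  rw [h3] at this
  convert this using 1
  abel

lemma toZ_nsmul (k : ℕ) (c : {v : V // v ≠ s} → ℕ) : toZ (k • c) = (k : ℤ) • toZ c := by
  funext v; simp [toZ]

theorem card_recSQuot (hG : StronglyConnected src tgt) (s : V) :
    Nat.card (RecSQuot src tgt s) =
      (imM (Lmat src tgt s) ⊔ AddSubgroup.zmultiples (toZ (betaS src tgt s))).index := by
  set H := imM (Lmat src tgt s) ⊔ AddSubgroup.zmultiples (toZ (betaS src tgt s)) with hH
  have hle : imM (Lmat src tgt s) ≤ H := le_sup_left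
  have hβ : toZ (betaS src tgt s) ∈ H :=
    (le_sup_right : _ ≤ H) (AddSubgroup.mem_zmultiples _)
  have key : ∀ a b : RecS src tgt s, (recSSetoid src tgt s) a b ↔ toZ a.1 - toZ b.1 ∈ H := by
    intro a b
    constructor
    · intro h
      change Relation.EqvGen _ a b at h
      induction h with
      | rel x y h =>
        obtain ⟨k, hk⟩ := h
        have h1 := hle (stab_mem hG (x.1 + k • betaS src tgt s))
        rw [hk, toZ_add, toZ_nsmul] at h1
        have := AddSubgroup.sub_mem _ h1 (AddSubgroup.zsmul_mem _ hβ k)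
        convert this using 1
        abel
      | refl x => simp [AddSubgroup.zero_mem]
      | symm x y _ ih => simpa using AddSubgroup.neg_mem _ ih
      | trans x y z _ _ ih1 ih2 => simpa using AddSubgroup.add_mem _ ih1 ih2
    · intro h
      obtain ⟨l, hl, m, hm, hlm⟩ := AddSubgroup.mem_sup.1 h
      obtain ⟨k, rfl⟩ := AddSubgroup.mem_zmultiples_iff.1 hm
      set D := (Lmat src tgt s).det.natAbs with hD
      have hDpos : 1 ≤ D := Int.natAbs_pos.2 (L_det_ne_zero src tgt hG s)
      -- choose a natural number congruent to -k
      obtain ⟨n, hn⟩ : ∃ n : ℕ, (n : ℤ) = -k + D * (k.natAbs : ℤ) := by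
        refine ⟨(-k + D * (k.natAbs : ℤ)).toNat, ?_⟩
        have : (k.natAbs : ℤ) ≤ D * (k.natAbs : ℤ) := by
          have hD' : (1 : ℤ) ≤ D := by exact_mod_cast hDpos
          nlinarith
        generalize (D : ℤ) * (k.natAbs : ℤ) = t at *
        omega
      refine Relation.EqvGen.rel _ _ ⟨n, rec_inj hG (rec_add hG a.2 _) b.2 ?_⟩
      have h1 := AddSubgroup.neg_mem _ (stab_mem hG (a.1 + n • betaS src tgt s))
      have h2 := AddSubgroup.zsmul_mem _ (abs_det_smul_mem (src := src) (tgt := tgt)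
        (toZ (betaS src tgt s))) (k.natAbs : ℤ)
      have := AddSubgroup.add_mem _ h1 (AddSubgroup.add_mem _ hl h2)
      convert this using 1
      have e : toZ a.1 = l + k • toZ (betaS src tgt s) + toZ b.1 := by rw [hlm]; abel
      rw [toZ_add, toZ_nsmul, e, hn, ← hD]
      module
  rw [AddSubgroup.index]
  refine Nat.card_congr (Equiv.ofBijective
    (Quotient.lift (fun a : RecS src tgt s =>
      (QuotientAddGroup.mk (toZ a.1) : ({v : V // v ≠ s} → ℤ) ⧸ H)) ?_) ⟨?_, ?_⟩)
  · intro a b hab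
    have := (key a b).1 hab
    rw [QuotientAddGroup.eq]
    have h2 := AddSubgroup.neg_mem _ this
    convert h2 using 1
    abel
  · rintro ⟨a⟩ ⟨b⟩ hab
    refine Quotient.sound ((key a b).2 ?_)
    have h1 := QuotientAddGroup.eq.1 (show (QuotientAddGroup.mk (toZ a.1) :
      ({v : V // v ≠ s} → ℤ) ⧸ H) = QuotientAddGroup.mk (toZ b.1) from hab)
    have h2 := AddSubgroup.neg_mem _ h1
    convert h2 using 1
    abel
  · rintro ⟨z⟩
    obtain ⟨c, hc, hz⟩ := exists_rec hG z
    refine ⟨Quotient.mk _ ⟨c, hc⟩, ?_⟩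
    change (QuotientAddGroup.mk (toZ c) : ({v : V // v ≠ s} → ℤ) ⧸ H) = QuotientAddGroup.mk z
    rw [QuotientAddGroup.eq]
    have h2 := AddSubgroup.neg_mem _ (hle hz)
    convert h2 using 1
    abel
end


lemma lap_mulVec_ext (src tgt : E → V) (s : V) (q : {v : V // v ≠ s} → ℤ) (k : ℤ)
    (w : {v : V // v ≠ s}) :
    (lapMatrix src tgt).mulVec (extZ s q k) w.1 =
      (Lmat src tgt s).mulVec q w - k * toZ (betaS src tgt s) w := by
  simp only [Matrix.mulVec, dotProduct]
  rw [sum_split s]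
  simp only [extZ_s, extZ_ne, Matrix.submatrix_apply, toZ, betaS]
  rw [lap_apply src tgt w.1 s, if_neg w.2]
  ring

lemma ext_self (s : V) (q : V → ℤ) : extZ s (fun v => q v.1) (q s) = q := by
  funext v
  by_cases h : v = s
  · subst h; simp
  · simp [extZ, h]

lemma lap_mulVec_sum (src tgt : E → V) (q : V → ℤ) :
    ∑ v, (lapMatrix src tgt).mulVec q v = 0 := by
  simp only [Matrix.mulVec, dotProduct]
  rw [Finset.sum_comm]
  simp_rw [← Finset.sum_mul, lap_colsum]
  simp

lemma eq_of_sum_eq (s : V) (x y : V → ℤ) (h : ∑ v, x v = ∑ v, y v)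
    (h' : ∀ v : {v : V // v ≠ s}, x v.1 = y v.1) : x = y := by
  rw [sum_split s x, sum_split s y, Finset.sum_congr rfl (fun v _ => h' v)] at h
  funext v
  by_cases hv : v = s
  · subst hv; linarith
  · exact h' ⟨v, hv⟩

lemma beta_mem_iff (src tgt : E → V) (s : V) (k : ℤ) :
    k • toZ (betaS src tgt s) ∈ imM (Lmat src tgt s) ↔
      ∃ q : V → ℤ, (lapMatrix src tgt).mulVec q = 0 ∧ q s = k := by
  rw [mem_imM]
  constructor
  · rintro ⟨q, hq⟩
    refine ⟨extZ s q k, eq_of_sum_eq s _ _ (by rw [lap_mulVec_sum]; simp) (fun w => ?_), by simp⟩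
    rw [lap_mulVec_ext, hq]
    simp
  · rintro ⟨q, hq, rfl⟩
    refine ⟨fun v => q v.1, ?_⟩
    funext w
    have h := lap_mulVec_ext src tgt s (fun v => q v.1) (q s) w
    rw [ext_self, hq] at h
    simp only [Pi.zero_apply] at h
    simp only [Pi.smul_apply, smul_eq_mul]
    linarith

/-- The map `x ↦ x + (∑ x) y`. -/
def shear (y : V → ℤ) : (V → ℤ) →+ (V → ℤ) where
  toFun x := x + (∑ v, x v) • y
  map_zero' := by simp
  map_add' a b := by
    simp only [Pi.add_apply, Finset.sum_add_distrib]
    module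

lemma shear_apply (y x : V → ℤ) : shear y x = x + (∑ v, x v) • y := rfl

/-- Restriction of integer vectors away from `s`. -/
def resZ (s : V) : (V → ℤ) →+ ({v : V // v ≠ s} → ℤ) where
  toFun x := fun v => x v.1
  map_zero' := rfl
  map_add' _ _ := rfl

lemma comap_restrict (src tgt : E → V) (s : V) :
    (imM (Lmat src tgt s) ⊔ AddSubgroup.zmultiples (toZ (betaS src tgt s))).comap
      (resZ s) = (imM (lapMatrix src tgt)).comap (shear (-Pi.single s 1)) := by
  ext x
  rw [AddSubgroup.mem_comap, AddSubgroup.mem_comap, mem_imM, AddSubgroup.mem_sup, shear_apply]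
  constructor
  · rintro ⟨y, hy, z, hz, hyz⟩
    obtain ⟨q, rfl⟩ := (mem_imM _ _).1 hy
    obtain ⟨k, rfl⟩ := AddSubgroup.mem_zmultiples_iff.1 hz
    refine ⟨extZ s q (-k), eq_of_sum_eq s _ _ ?_ (fun w => ?_)⟩
    · rw [lap_mulVec_sum]
      simp [Finset.sum_add_distrib, ← Finset.mul_sum]
    · rw [lap_mulVec_ext]
      have := congrFun hyz w
      simp only [resZ, Pi.add_apply, Pi.smul_apply, smul_eq_mul, AddMonoidHom.coe_mk,
        ZeroHom.coe_mk] at this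
      simp [w.2, ← this]
  · rintro ⟨q, hq⟩
    refine ⟨_, (mem_imM _ _).2 ⟨fun v => q v.1, rfl⟩, _,
      AddSubgroup.mem_zmultiples_iff.2 ⟨- q s, rfl⟩, ?_⟩
    funext w
    have h := lap_mulVec_ext src tgt s (fun v => q v.1) (q s) w
    rw [ext_self, hq] at h
    simp [w.2] at h
    simp only [resZ, Pi.add_apply, Pi.smul_apply, smul_eq_mul, AddMonoidHom.coe_mk,
        ZeroHom.coe_mk]
    rw [h]
    ring

lemma index_eq_shear (src tgt : E → V) (s : V) :
    (imM (Lmat src tgt s) ⊔ AddSubgroup.zmultiples (toZ (betaS src tgt s))).index =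
      ((imM (lapMatrix src tgt)).comap (shear (-Pi.single s 1))).index := by
  rw [← comap_restrict, AddSubgroup.index_comap_of_surjective]
  intro x
  refine ⟨extZ s x 0, ?_⟩
  funext v
  exact extZ_ne s x 0 v

lemma shear_shear (y z : V → ℤ) (hy : ∑ v, y v = 0) (x : V → ℤ) :
    shear z (shear y x) = shear (y + z) x := by
  simp only [shear_apply, Pi.add_apply, Pi.smul_apply, smul_eq_mul, Finset.sum_add_distrib,
    ← Finset.mul_sum, hy]
  module

lemma index_indep (src tgt : E → V) (s t : V) :
    (imM (Lmat src tgt s) ⊔ AddSubgroup.zmultiples (toZ (betaS src tgt s))).index =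
    (imM (Lmat src tgt t) ⊔ AddSubgroup.zmultiples (toZ (betaS src tgt t))).index := by
  rw [index_eq_shear, index_eq_shear]
  have h0 : ∑ v, (Pi.single t 1 - Pi.single s 1 : V → ℤ) v = 0 := by
    simp [Finset.sum_sub_distrib]
  have h0' : ∑ v, (Pi.single s 1 - Pi.single t 1 : V → ℤ) v = 0 := by
    simp [Finset.sum_sub_distrib]
  have hs : Function.Surjective (shear (Pi.single t 1 - Pi.single s 1 : V → ℤ)) := by
    intro x
    refine ⟨shear (Pi.single s 1 - Pi.single t 1) x, ?_⟩
    rw [shear_shear _ _ h0', shear_apply]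
    simp
  rw [← AddSubgroup.index_comap_of_surjective
    ((imM (lapMatrix src tgt)).comap (shear (-Pi.single t 1))) hs]
  congr 1
  ext x
  simp only [AddSubgroup.mem_comap]
  rw [shear_shear _ _ h0]
  congr! 2
  abel_nf

lemma det_eq (src tgt : E → V) (hG : StronglyConnected src tgt) (s : V) :
    ∃ n : ℕ, (reducedLapDet src tgt s).natAbs = n *
      (imM (Lmat src tgt s) ⊔ AddSubgroup.zmultiples (toZ (betaS src tgt s))).index ∧
      ∀ k : ℤ, (n : ℤ) ∣ k ↔ ∃ q : V → ℤ, (lapMatrix src tgt).mulVec q = 0 ∧ q s = k := by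
  let f : ℤ →+ ({v : V // v ≠ s} → ℤ) := zmultiplesHom _ (toZ (betaS src tgt s))
  refine ⟨((imM (Lmat src tgt s)).comap f).index, ?_, fun k => ?_⟩
  · change (Lmat src tgt s).det.natAbs = _
    rw [← index_imM _ (L_det_ne_zero src tgt hG s), AddSubgroup.index_comap,
      ← AddSubgroup.relIndex_mul_index (le_sup_left : imM (Lmat src tgt s) ≤ imM (Lmat src tgt s) ⊔
        AddSubgroup.zmultiples (toZ (betaS src tgt s))), AddSubgroup.relIndex_sup_left]
    rfl
  · rw [← beta_mem_iff]
    obtain ⟨a, ha⟩ := Int.subgroup_cyclic ((imM (Lmat src tgt s)).comap f)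
    rw [← AddSubgroup.zmultiples_eq_closure] at ha
    have h1 : k • toZ (betaS src tgt s) ∈ imM (Lmat src tgt s) ↔
        k ∈ (imM (Lmat src tgt s)).comap f := by
      rw [AddSubgroup.mem_comap]; rfl
    rw [h1, ha, Int.index_zmultiples, Int.mem_zmultiples_iff, Int.natAbs_dvd]

/-- The number of `~_s`-classes of s-recurrent configurations equals
the period constant `α = gcd_{v∈V} det Δ_v`; in particular it does not depend on `s`. -/
theorem card_recSQuot_eq_periodConstant [Nonempty V] (src tgt : E → V)
    (hG : StronglyConnected src tgt) (s : V) :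
    (Nat.card (RecSQuot src tgt s) : ℤ) = periodConstant src tgt := by
  rw [card_recSQuot hG s]
  choose n hn1 hn2 using det_eq src tgt hG
  set h := (imM (Lmat src tgt s) ⊔ AddSubgroup.zmultiples (toZ (betaS src tgt s))).index with hh
  have hn : ∀ v, (reducedLapDet src tgt v).natAbs = n v * h := fun v => by
    rw [hn1, index_indep src tgt v s]
  have hne : n s * h ≠ 0 := by
    rw [← hn]; exact Int.natAbs_ne_zero.2 (L_det_ne_zero src tgt hG s)
  have hh0 : h ≠ 0 := right_ne_zero_of_mul hne
  have hs0 : n s ≠ 0 := left_ne_zero_of_mul hne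
  have hdvd : (h : ℤ) ∣ periodConstant src tgt := by
    refine Finset.dvd_gcd fun v _ => ?_
    rw [← Int.dvd_natAbs, hn]
    exact_mod_cast dvd_mul_left _ _
  have hnorm : 0 ≤ periodConstant src tgt := by
    rw [periodConstant, ← Finset.normalize_gcd, ← Int.abs_eq_normalize]
    exact abs_nonneg _
  obtain ⟨g, hg⟩ := hdvd
  have hgn : ∀ v, g ∣ n v := by
    intro v
    have h1 : periodConstant src tgt ∣ reducedLapDet src tgt v :=
      Finset.gcd_dvd (Finset.mem_univ v)
    rw [hg, ← Int.dvd_natAbs, hn, Nat.cast_mul, mul_comm (n v : ℤ)] at h1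
    exact Int.dvd_of_mul_dvd_mul_left (by exact_mod_cast hh0) h1
  obtain ⟨q, hq0, hqs⟩ := (hn2 s (n s)).1 dvd_rfl
  have hgq : ∀ v, g ∣ q v := fun v => (hgn v).trans ((hn2 v (q v)).2 ⟨q, hq0, rfl⟩)
  choose p hp using hgq
  have hg0 : g ≠ 0 := by
    rintro rfl
    have := hgn s
    rw [zero_dvd_iff] at this
    exact hs0 (by exact_mod_cast this)
  have hqp : q = g • p := by funext v; simp [hp]
  have hp0 : (lapMatrix src tgt).mulVec p = 0 := by
    rw [hqp, Matrix.mulVec_smul] at hq0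
    exact (smul_eq_zero.1 hq0).resolve_left hg0
  have h3 : (n s : ℤ) ∣ p s := (hn2 s (p s)).2 ⟨p, hp0, rfl⟩
  have h4 : (n s : ℤ) = g * p s := by rw [← hqs, ← hp]
  have h5 : g ∣ 1 := by
    obtain ⟨m, hm⟩ := h3
    have hs0' : (n s : ℤ) ≠ 0 := by exact_mod_cast hs0
    refine ⟨m, ?_⟩
    rw [hm] at h4
    have : (n s : ℤ) * 1 = n s * (g * m) := by linarith
    exact mul_left_cancel₀ hs0' this
  have h6 : g = 1 := by
    rcases Int.isUnit_iff.1 (isUnit_of_dvd_one h5) with h | h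
    · exact h
    · exfalso
      rw [hg, h] at hnorm
      omega
  rw [hg, h6, mul_one]

end SandpileBM
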